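/- Let ε be a real number with 0 < ε ≤ 1/2. There exist constants c > 0 and C ≥ 1 such that for every integer n ≥ 2 there is an instance (J,M) of P||C_max with at most C·n jobs, at most C·n machines, processing times p_j ∈ {1,2}, and opt(J,M) = 2, with the following property: every polytope Q̄ ⊆ Q(J,M) such that (i) every extreme point of Q̄ is the assignment vector x^σ of some schedule σ with makespan at most (3/2 − ε)·opt(J,M), and (ii) Q̄ contains x^σ for every schedule σ of makespan opt(J,M) = 2, satisfies xc(Q̄) ≥ 2^{c·n/log n}. -/

import Mathlib

open Finset

noncomputable section

/-- An extended formulation of size `k` (number of inequalities) for `P ⊆ ℝ^ι`. -/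
def IsEF {ι : Type} [Fintype ι] (P : Set (ι → ℝ)) (k : ℕ) : Prop :=
  ∃ (e l : ℕ) (A : Matrix (Fin k) (Fin e) ℝ) (b : Fin k → ℝ)
    (C : Matrix (Fin l) (Fin e) ℝ) (d : Fin l → ℝ)
    (π : (Fin e → ℝ) →ᵃ[ℝ] (ι → ℝ)),
    π '' {y | (∀ r, A.mulVec y r ≤ b r) ∧ (∀ r, C.mulVec y r = d r)} = P

/-- The extension complexity of `P`. -/
noncomputable def xc {ι : Type} [Fintype ι] (P : Set (ι → ℝ)) : ℕ :=
  sInf {k | IsEF P k}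

/-- The load of machine `i` under schedule `σ`. -/
def load {n m : ℕ} (p : Fin n → ℕ) (σ : Fin n → Fin m) (i : Fin m) : ℕ :=
  ∑ j, if σ j = i then p j else 0

/-- The makespan of a schedule: the maximum machine load. -/
def makespan {n m : ℕ} (p : Fin n → ℕ) (σ : Fin n → Fin m) : ℕ :=
  Finset.univ.sup (load p σ)

/-- The optimal makespan of the instance. -/
noncomputable def optMakespan (n m : ℕ) (p : Fin n → ℕ) : ℕ :=
  sInf {t | ∃ σ : Fin n → Fin m, makespan p σ = t}

/-- The 0/1 assignment vector of a schedule, indexed by machine-job pairs. -/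
def assignVec {n m : ℕ} (σ : Fin n → Fin m) : Fin m × Fin n → ℝ :=
  fun q => if σ q.2 = q.1 then 1 else 0

/-- `Q(J,M)`: the convex hull of the assignment vectors of all schedules. -/
def Qpoly (n m : ℕ) : Set (Fin m × Fin n → ℝ) :=
  convexHull ℝ {x | ∃ σ : Fin n → Fin m, x = assignVec σ}

/-- `P(J,M)`: the convex hull of all points `(x^σ, T)` where `σ` is a schedule and the
natural number `T` upper-bounds every machine load; the `T`-coordinate is the `none`
coordinate of the ambient space `ℝ^(Option (M × J))`. -/
def Ppoly (n m : ℕ) (p : Fin n → ℕ) : Set (Option (Fin m × Fin n) → ℝ) :=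
  convexHull ℝ {z | ∃ (σ : Fin n → Fin m) (t : ℕ), (∀ i, load p σ i ≤ t) ∧
    z = fun q => Option.elim q (t : ℝ) (fun ij => assignVec σ ij)}

/-!
An extended formulation of `Qbar` with `k` inequalities gives, by Farkas' lemma, a nonnegative
factorization with `k + 1` terms of every matrix of slacks of valid inequalities at points of `Qbar`
(Yannakakis).

Take `2 d` machines, `2 d` unit jobs and `d` jobs of size two. A perfect matching `F` of
`{0, …, 2 d - 1}` yields a schedule of makespan `2`: the unit jobs `i` and `F i` share the machine
`min i (F i)`, and the jobs of size two take the remaining machines. If `U` is an odd set, then in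
every schedule of makespan `2` some unit job is separated by `U` from its machine, since otherwise
the machines in `U` would carry an odd total load. The loads are integers, so a makespan less than
`3` is at most `2`, and this inequality is valid for `Qbar`. Its slack at the schedule of `F` is
that of the odd cut inequality of `U` at `F`, so it remains to show that the slack matrix of the
perfect matching polytope has exponential nonnegative rank (Rothvoß).

This follows from a pentagon in the complete graph. Average a factorization over the configurations
obtained by permuting the vertices and by switching many disjoint edges on or off independently. By
the level-one inequality on the cube, a term that is not exponentially small barely changes its mean
when a typical edge is switched. Hence, for each of the five pentagon edges `k`, the products of the
means with `k` in play, which add up to the slack `2`, are nearly bounded by the products of the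
means with no pentagon edge in play, which are the same for all `k` and add up to `4`. But the slack
of `k` against `k + 2` vanishes, so in each term at most two of the five products are nonzero, and
`5 * 2` would be at most nearly `2 * 4`.
-/

/-! ### Farkas' lemma and Yannakakis' factorization -/

section Farkas

variable {𝕜 W κ : Type*} [Field 𝕜] [AddCommGroup W] [Module 𝕜 W]

/-- The linear functional `(v, t) ↦ t • φ (v / t)` on `W × 𝕜` attached to an affine functional `φ`
on `W`; it restricts to `φ` on the hyperplane `t = 1`. -/
def homogenize (φ : W →ᵃ[𝕜] 𝕜) : W × 𝕜 →ₗ[𝕜] 𝕜 :=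
  φ.linear.coprod (LinearMap.toSpanSingleton 𝕜 𝕜 (φ 0))

lemma homogenize_one (φ : W →ᵃ[𝕜] 𝕜) (v : W) : homogenize φ (v, 1) = φ v := by
  simpa [homogenize] using (φ.map_vadd 0 v).symm

lemma homogenize_of_ne_zero (φ : W →ᵃ[𝕜] 𝕜) (v : W) {t : 𝕜} (ht : t ≠ 0) :
    homogenize φ (v, t) = t * φ (t⁻¹ • v) := by
  rw [← homogenize_one, ← smul_eq_mul, ← map_smul, Prod.smul_mk, smul_inv_smul₀ ht, smul_eq_mul,
    mul_one]

variable [LinearOrder 𝕜] [IsStrictOrderedRing 𝕜]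

lemma exists_apply_eq_one_of_not_forall {s : Finset κ} {a : κ → W →ₗ[𝕜] 𝕜} {b : W →ₗ[𝕜] 𝕜}
    (l : W →ₗ[𝕜] 𝕜) (h : ∀ x, (∀ i ∈ s, 0 ≤ a i x) → 0 ≤ l x → 0 ≤ b x)
    (hs : ¬∀ x, (∀ i ∈ s, 0 ≤ a i x) → 0 ≤ b x) :
    ∃ x, l x = 1 ∧ 0 < b x ∧ ∀ i ∈ s, a i x ≤ 0 := by
  push Not at hs
  obtain ⟨x, hx, hbx⟩ := hs
  have hlx : l x < 0 := by
    by_contra! hlx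
    exact hbx.not_ge (h x hx hlx)
  refine ⟨(l x)⁻¹ • x, ?_, ?_, fun i hi => ?_⟩ <;> rw [map_smul, smul_eq_mul]
  · exact inv_mul_cancel₀ hlx.ne
  · exact mul_pos_of_neg_of_neg (inv_lt_zero.2 hlx) hbx
  · exact mul_nonpos_of_nonpos_of_nonneg (inv_nonpos.2 hlx.le) (hx i hi)

/- Induction on the number of functionals: if `b` is not already dominated without `a m`, some `x₀`
violates this with `a m x₀ = 1`; projecting along `x₀` onto the kernel of `a m` eliminates `a m`. -/
lemma farkas (s : Finset κ) (a : κ → W →ₗ[𝕜] 𝕜) (b : W →ₗ[𝕜] 𝕜)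
    (h : ∀ x, (∀ i ∈ s, 0 ≤ a i x) → 0 ≤ b x) :
    ∃ c : κ → 𝕜, (∀ i, 0 ≤ c i) ∧ b = ∑ i ∈ s, c i • a i := by
  classical
  induction s using Finset.induction_on generalizing a b with
  | empty =>
    refine ⟨0, fun _ => le_rfl, LinearMap.ext fun x => le_antisymm ?_ ?_⟩
    · simpa using h (-x) (by simp)
    · simpa using h x (by simp)
  | insert m s hm ih =>
    by_cases hs : ∀ x, (∀ i ∈ s, 0 ≤ a i x) → 0 ≤ b x
    · obtain ⟨c, hc, rfl⟩ := ih a b hs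
      refine ⟨Function.update c m 0, fun i => ?_, ?_⟩
      · rcases eq_or_ne i m with rfl | him <;> simp [*]
      · rw [sum_insert hm, Function.update_self, zero_smul, zero_add]
        exact sum_congr rfl fun i hi => by
          rw [Function.update_of_ne (ne_of_mem_of_not_mem hi hm)]
    obtain ⟨x₀, hmx₀, hbx₀, hax₀⟩ := exists_apply_eq_one_of_not_forall (a m)
      (fun x hx hmx => h x (forall_mem_insert _ _ _ |>.2 ⟨hmx, hx⟩)) hs
    obtain ⟨c, hc, hb⟩ := ih (fun i => a i - a i x₀ • a m) (b - b x₀ • a m) fun x hx => by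
      have := h (x - a m x • x₀) (forall_mem_insert _ _ _ |>.2
        ⟨by simp [hmx₀], fun i hi => by simpa [mul_comm] using hx i hi⟩)
      simpa [mul_comm] using this
    refine ⟨Function.update c m (b x₀ - ∑ i ∈ s, c i * a i x₀), fun i => ?_, ?_⟩
    · rcases eq_or_ne i m with rfl | him
      · have : ∑ i ∈ s, c i * a i x₀ ≤ 0 :=
          sum_nonpos fun i hi => mul_nonpos_of_nonneg_of_nonpos (hc i) (hax₀ i hi)
        rw [Function.update_self]
        linarith
      · simpa [him] using hc i
    · have hupdate : ∀ i ∈ s, Function.update c m (b x₀ - ∑ i ∈ s, c i * a i x₀) i • a i =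
          c i • a i := fun i hi => by
        rw [Function.update_of_ne (ne_of_mem_of_not_mem hi hm)]
      simp only [smul_sub, smul_smul, sum_sub_distrib, ← sum_smul] at hb
      rw [sum_insert hm, Function.update_self, sum_congr rfl hupdate]
      linear_combination (norm := module) hb

lemma affine_farkas [Fintype κ] (a : κ → W →ᵃ[𝕜] 𝕜) (b : W →ᵃ[𝕜] 𝕜)
    (hne : ∃ y, ∀ i, 0 ≤ a i y) (h : ∀ y, (∀ i, 0 ≤ a i y) → 0 ≤ b y) :
    ∃ (c₀ : 𝕜) (c : κ → 𝕜), 0 ≤ c₀ ∧ (∀ i, 0 ≤ c i) ∧ ∀ y, b y = c₀ + ∑ i, c i * a i y := by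
  obtain ⟨y₀, hy₀⟩ := hne
  have hpos : ∀ (v : W) (t : 𝕜), 0 < t → (∀ i, 0 ≤ homogenize (a i) (v, t)) →
      0 ≤ homogenize b (v, t) := fun v t ht hv => by
    rw [homogenize_of_ne_zero b v ht.ne']
    refine mul_nonneg ht.le (h _ fun i => ?_)
    have := hv i
    rwa [homogenize_of_ne_zero _ _ ht.ne', mul_nonneg_iff_of_pos_left ht] at this
  obtain ⟨c, hc, hbc⟩ := farkas univ
    (fun i : Option κ => i.elim (LinearMap.snd 𝕜 W 𝕜) fun i => homogenize (a i)) (homogenize b)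
    fun ⟨v, t⟩ hv => by
      have ht : 0 ≤ t := hv none (mem_univ _)
      have hperturb : ∀ δ > 0, 0 ≤ homogenize b (v, t) + δ * b y₀ := fun δ hδ => by
        have hsplit : ∀ φ : W →ᵃ[𝕜] 𝕜, homogenize φ (v + δ • y₀, t + δ) =
            homogenize φ (v, t) + δ * φ y₀ := fun φ => by
          rw [← homogenize_one φ y₀, ← smul_eq_mul, ← map_smul, ← map_add]
          simp
        rw [← hsplit]
        refine hpos _ _ (by positivity) fun i => ?_
        rw [hsplit]
        exact add_nonneg (hv (some i) (mem_univ _)) (mul_nonneg hδ.le (hy₀ i))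
      by_contra! hneg
      have hb₀ : 0 < b y₀ + 1 := by linarith [h y₀ hy₀]
      have := hperturb (-homogenize b (v, t) / (b y₀ + 1)) (div_pos (neg_pos.2 hneg) hb₀)
      rw [div_mul_eq_mul_div, ← sub_neg_eq_add, ← neg_div, sub_nonneg, div_le_iff₀ hb₀] at this
      linarith
  refine ⟨c none, fun i => c (some i), hc _, fun i => hc _, fun y => ?_⟩
  simpa [homogenize_one] using congrArg (fun φ => φ (y, (1 : 𝕜))) hbc

end Farkas

/-- The matrix `S` is a sum of `r` nonnegative matrices of rank one, i.e. its nonnegative rank is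
at most `r`. -/
def HasNonnegFactorization {X Y : Type*} (S : X → Y → ℝ) (r : ℕ) : Prop :=
  ∃ (f : Fin r → X → ℝ) (g : Fin r → Y → ℝ), (∀ t x, 0 ≤ f t x) ∧ (∀ t y, 0 ≤ g t y) ∧
    ∀ x y, S x y = ∑ t, f t x * g t y

lemma HasNonnegFactorization.submatrix {X Y X' Y' : Type*} {S : X → Y → ℝ} {r : ℕ}
    (h : HasNonnegFactorization S r) (φ : X' → X) (ψ : Y' → Y) :
    HasNonnegFactorization (fun x y => S (φ x) (ψ y)) r := by
  obtain ⟨f, g, hf, hg, hfg⟩ := h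
  exact ⟨fun t x => f t (φ x), fun t y => g t (ψ y), fun t x => hf t _, fun t y => hg t _,
    fun x y => hfg _ _⟩

section ExtendedFormulation

variable {ι : Type} [Fintype ι]

lemma IsEF.hasNonnegFactorization {P : Set (ι → ℝ)} {k : ℕ} (h : IsEF P k) {X Y : Type*}
    (p : X → ι → ℝ) (hp : ∀ x, p x ∈ P) (w : Y → (ι → ℝ) →ᵃ[ℝ] ℝ)
    (hw : ∀ y, ∀ z ∈ P, 0 ≤ w y z) :
    HasNonnegFactorization (fun x y => w y (p x)) (k + 1) := by
  rcases isEmpty_or_nonempty X with hX | ⟨⟨x₀⟩⟩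
  · exact ⟨0, 0, fun _ _ => le_rfl, fun _ _ => le_rfl, isEmptyElim⟩
  obtain ⟨e, l, A, b, C, d, π, rfl⟩ := h
  choose q hq hqp using hp
  let coord {n : ℕ} (M : Matrix (Fin n) (Fin e) ℝ) (r : Fin n) : (Fin e → ℝ) →ᵃ[ℝ] ℝ :=
    ((LinearMap.proj r).comp M.mulVecLin).toAffineMap
  let ineq (r : Fin k) := AffineMap.const ℝ (Fin e → ℝ) (b r) - coord A r
  let equ (r : Fin l) := coord C r - AffineMap.const ℝ (Fin e → ℝ) (d r)
  have hineq (r y) : ineq r y = b r - A.mulVec y r := rfl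
  have hequ (r y) : equ r y = C.mulVec y r - d r := rfl
  -- An equation is encoded as two opposite inequalities, whose slacks vanish on the polyhedron.
  have hfarkas (y : Y) := affine_farkas (Sum.elim ineq (Sum.elim equ fun r => -equ r))
    ((w y).comp π)
    ⟨q x₀, by simpa [Sum.forall, hineq, hequ, (hq x₀).2] using (hq x₀).1⟩
    fun z hz => by
      simp only [Sum.forall, Sum.elim_inl, Sum.elim_inr, AffineMap.coe_neg, Pi.neg_apply,
        hineq, hequ, sub_nonneg, neg_sub] at hz
      exact hw y _ ⟨z, ⟨hz.1, fun r => (hz.2.2 r).antisymm (hz.2.1 r)⟩, rfl⟩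
  choose c₀ c hc₀ hc hcw using hfarkas
  refine ⟨Fin.cons 1 fun r x => ineq r (q x), Fin.cons c₀ fun r y => c y (.inl r), ?_, ?_,
    fun x y => ?_⟩
  · exact Fin.cases (fun _ => zero_le_one) fun r x => sub_nonneg.2 ((hq x).1 r)
  · exact Fin.cases hc₀ fun r y => hc y _
  · change w y (p x) = _
    rw [← hqp x]
    simpa [Fin.sum_univ_succ, hequ, (hq x).2, mul_comm] using hcw y (q x)

lemma exists_isEF_convexHull {S : Set (ι → ℝ)} (hS : S.Finite) :
    ∃ k, IsEF (convexHull ℝ S) k := by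
  classical
  obtain ⟨n, v, hv⟩ := hS.fin_param
  obtain rfl := hv.2
  refine ⟨n, n, 1, -1, 0, Matrix.of fun _ _ => 1, 1,
    (Fintype.linearCombination ℝ v).toAffineMap, ?_⟩
  have himage : convexHull ℝ (Set.range v) =
      Fintype.linearCombination ℝ v '' stdSimplex ℝ (Fin n) := by
    rw [← convexHull_rangle_single_eq_stdSimplex, LinearMap.image_convexHull, ← Set.range_comp]
    congr 2
    ext i : 1
    simp [Fintype.linearCombination_apply_single]
  rw [himage]
  congr 1
  ext y
  have hneg : (-1 : Matrix (Fin n) (Fin n) ℝ).mulVec y = -y := by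
    rw [Matrix.neg_mulVec, Matrix.one_mulVec]
  rw [Set.mem_ofPred_eq, hneg]
  simp [stdSimplex, Matrix.mulVec, dotProduct]

lemma isEF_xc_convexHull {S : Set (ι → ℝ)} (hS : S.Finite) :
    IsEF (convexHull ℝ S) (xc (convexHull ℝ S)) :=
  Nat.sInf_mem (exists_isEF_convexHull hS)

end ExtendedFormulation

/-! ### The level-one inequality on the cube -/

section Cube

open scoped BigOperators

/-- The sign `(-1) ^ b`. -/
def boolSign (b : Bool) : ℝ := if b then -1 else 1

@[simp] lemma boolSign_false : boolSign false = 1 := rfl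

@[simp] lemma boolSign_true : boolSign true = -1 := rfl

variable {ι : Type*} [Fintype ι] [DecidableEq ι]

/-- The degree-one Fourier coefficient `𝔼 (-1) ^ (a i) * f a` of a function on the cube. -/
def levelOneCoeff (i : ι) (f : (ι → Bool) → ℝ) : ℝ := 𝔼 a, boolSign (a i) * f a

/-- The mean of a function over the facet of the cube on which coordinate `i` equals `c`. -/
def facetMean (i : ι) (c : Bool) (f : (ι → Bool) → ℝ) : ℝ := 𝔼 a with a i = c, f a

/-- The squared degree-one Fourier coefficient relative to the mean; it is `0` at mean `0`. -/
def relDeviation (i : ι) (f : (ι → Bool) → ℝ) : ℝ := levelOneCoeff i f ^ 2 / 𝔼 a, f a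

lemma expect_boolSign (i : ι) : 𝔼 a : ι → Bool, boolSign (a i) = 0 := by
  suffices 𝔼 a : ι → Bool, boolSign (a i) = -𝔼 a : ι → Bool, boolSign (a i) by linarith
  rw [← expect_neg_distrib]
  refine Fintype.expect_equiv (Equiv.piCongrRight fun _ => Equiv.boolNot) _ _ fun a => ?_
  cases h : a i <;> simp [h]

lemma facetMean_eq (i : ι) (c : Bool) (f : (ι → Bool) → ℝ) :
    facetMean i c f = (𝔼 a, f a) + boolSign c * levelOneCoeff i f := by
  have hsum (g : (ι → Bool) → ℝ) : ∑ a with a i = c, g a =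
      (∑ a, g a + boolSign c * ∑ a, boolSign (a i) * g a) / 2 := by
    rw [sum_filter, mul_sum, ← sum_add_distrib, sum_div]
    refine sum_congr rfl fun a _ => ?_
    cases h : a i <;> cases c <;> simp
  have hsign : ∑ a : ι → Bool, boolSign (a i) = 0 := by
    rw [← Fintype.card_mul_expect, expect_boolSign, mul_zero]
  have hcard : (#{a : ι → Bool | a i = c} : ℝ) = Fintype.card (ι → Bool) / 2 := by
    simpa [hsign] using hsum 1
  rw [facetMean, levelOneCoeff, expect_eq_sum_div_card, Fintype.expect_eq_sum_div_card,
    Fintype.expect_eq_sum_div_card, hsum, hcard]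
  field_simp

lemma expect_eq_facetMean (i : ι) (f : (ι → Bool) → ℝ) :
    𝔼 a, f a = (facetMean i false f + facetMean i true f) / 2 := by
  rw [facetMean_eq, facetMean_eq, boolSign_false, boolSign_true]
  ring

lemma facet_nonempty (i : ι) (c : Bool) : ({a : ι → Bool | a i = c} : Finset _).Nonempty :=
  ⟨fun _ => c, by simp⟩

lemma facetMean_nonneg {f : (ι → Bool) → ℝ} (hf : ∀ a, 0 ≤ f a) (i : ι) (c : Bool) :
    0 ≤ facetMean i c f :=
  expect_nonneg fun a _ => hf a

lemma facetMean_congr {f g : (ι → Bool) → ℝ} {i : ι} {c : Bool} (h : ∀ a, a i = c → f a = g a) :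
    facetMean i c f = facetMean i c g :=
  expect_congr rfl fun a ha => h a (mem_filter.1 ha).2

lemma relDeviation_nonneg {f : (ι → Bool) → ℝ} (hf : ∀ a, 0 ≤ f a) (i : ι) :
    0 ≤ relDeviation i f :=
  div_nonneg (sq_nonneg _) (expect_nonneg fun a _ => hf a)

lemma relDeviation_eq (i : ι) (f : (ι → Bool) → ℝ) :
    relDeviation i f = (levelOneCoeff i f / 𝔼 a, f a) ^ 2 * 𝔼 a, f a := by
  rw [relDeviation]
  rcases eq_or_ne (𝔼 a, f a) 0 with h | h
  · simp [h]
  · field_simp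

lemma relDeviation_comp_swap (i j : ι) (f : (ι → Bool) → ℝ) :
    relDeviation i (fun a => f (a ∘ Equiv.swap i j)) = relDeviation j f := by
  have hswap (g : (ι → Bool) → ℝ) : 𝔼 a, g (a ∘ Equiv.swap i j) = 𝔼 a, g a :=
    Fintype.expect_equiv (Equiv.arrowCongr (Equiv.swap i j) (Equiv.refl Bool)) _ _
      fun a => by simp [Equiv.arrowCongr, Equiv.symm_swap]
  have hcoeff : levelOneCoeff i (fun a => f (a ∘ Equiv.swap i j)) = levelOneCoeff j f := by
    simpa [levelOneCoeff] using hswap fun a => boolSign (a j) * f a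
  rw [relDeviation, relDeviation, hcoeff, hswap]

lemma expect_mul_sum_mul_boolSign (f : (ι → Bool) → ℝ) (l : ι → ℝ) :
    𝔼 a, f a * ∑ i, l i * boolSign (a i) = ∑ i, l i * levelOneCoeff i f := by
  simp_rw [levelOneCoeff, mul_expect, mul_sum, expect_sum_comm]
  exact sum_congr rfl fun i _ => expect_congr rfl fun a _ => by ring

lemma expect_exp_sum_mul_boolSign_le (l : ι → ℝ) :
    𝔼 a : ι → Bool, Real.exp (∑ i, l i * boolSign (a i)) ≤ Real.exp ((∑ i, l i ^ 2) / 2) :=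
  calc
    𝔼 a : ι → Bool, Real.exp (∑ i, l i * boolSign (a i)) = ∏ i, Real.cosh (l i) := by
      have hcosh (i : ι) : Real.cosh (l i) = (∑ b, Real.exp (l i * boolSign b)) / 2 := by
        simp [Real.cosh_eq, boolSign, add_comm]
      simp_rw [hcosh, prod_div_distrib, prod_univ_sum, Fintype.piFinset_univ, Real.exp_sum]
      simp [Fintype.expect_eq_sum_div_card]
    _ ≤ ∏ i, Real.exp (l i ^ 2 / 2) :=
      prod_le_prod (fun i _ => (Real.cosh_pos _).le) fun i _ => Real.cosh_le_exp_half_sq _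
    _ = Real.exp ((∑ i, l i ^ 2) / 2) := by rw [← Real.exp_sum, sum_div]

section LevelOne

variable {f : (ι → Bool) → ℝ} {α : ℝ}

/- Tilting: take means in `f * exp (2 * s) * (1 + χ - 2 * s) ≤ α * exp χ`, where `χ` is the linear
form with coefficients `levelOneCoeff i f / 𝔼 f`. -/
lemma expect_mul_exp_le (hf : ∀ a, 0 ≤ f a) (hα : ∀ a, f a ≤ α) :
    (𝔼 a, f a) * Real.exp ((∑ i, (levelOneCoeff i f / 𝔼 a, f a) ^ 2) / 2) ≤ α := by
  set μ := 𝔼 a, f a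
  set s := (∑ i, (levelOneCoeff i f / μ) ^ 2) / 2 with hs
  let χ (a : ι → Bool) : ℝ := ∑ i, levelOneCoeff i f / μ * boolSign (a i)
  have hα₀ : 0 ≤ α := (hf fun _ => false).trans (hα _)
  have hχ : 𝔼 a, f a * χ a = 2 * s * μ := by
    have hrel (i : ι) : levelOneCoeff i f / μ * levelOneCoeff i f =
        (levelOneCoeff i f / μ) ^ 2 * μ := by rw [← relDeviation_eq, relDeviation]; ring
    rw [expect_mul_sum_mul_boolSign, sum_congr rfl fun i _ => hrel i, ← sum_mul, hs]
    ring
  have htilt (a : ι → Bool) :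
      Real.exp (2 * s) * ((1 - 2 * s) * f a + f a * χ a) ≤ α * Real.exp (χ a) :=
    calc
      _ = f a * (Real.exp (2 * s) * (χ a - 2 * s + 1)) := by ring
      _ ≤ f a * (Real.exp (2 * s) * Real.exp (χ a - 2 * s)) :=
        mul_le_mul_of_nonneg_left (mul_le_mul_of_nonneg_left (Real.add_one_le_exp _)
          (Real.exp_pos _).le) (hf a)
      _ = f a * Real.exp (χ a) := by rw [← Real.exp_add]; ring_nf
      _ ≤ α * Real.exp (χ a) := mul_le_mul_of_nonneg_right (hα a) (Real.exp_pos _).le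
  have hmean := expect_le_expect (s := univ) fun a _ => htilt a
  rw [← mul_expect, ← mul_expect, expect_add_distrib, ← mul_expect, hχ] at hmean
  have hexp : Real.exp (2 * s) = Real.exp s * Real.exp s := by rw [← Real.exp_add]; ring_nf
  refine le_of_mul_le_mul_right ?_ (Real.exp_pos s)
  calc
    μ * Real.exp s * Real.exp s = Real.exp (2 * s) * ((1 - 2 * s) * μ + 2 * s * μ) := by
      rw [hexp]; ring
    _ ≤ α * 𝔼 a, Real.exp (χ a) := hmean
    _ ≤ α * Real.exp s :=
      mul_le_mul_of_nonneg_left (expect_exp_sum_mul_boolSign_le _) hα₀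

lemma sum_relDeviation_le (hf : ∀ a, 0 ≤ f a) (hα : ∀ a, f a ≤ α) (L : ℝ) :
    ∑ i, relDeviation i f ≤ 2 * (L * 𝔼 a, f a + α * Real.exp (-L)) := by
  have hμ : 0 ≤ 𝔼 a, f a := expect_nonneg fun a _ => hf a
  have hα' := expect_mul_exp_le hf hα
  set μ := 𝔼 a, f a
  set s := (∑ i, (levelOneCoeff i f / μ) ^ 2) / 2 with hs
  calc
    ∑ i, relDeviation i f = 2 * (μ * s) := by
      rw [sum_congr rfl fun i _ => relDeviation_eq i f, ← sum_mul, hs]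
      ring
    _ ≤ 2 * (μ * (L + Real.exp (s - L))) := by
      have := Real.add_one_le_exp (s - L)
      gcongr
      linarith
    _ = 2 * (L * μ + μ * Real.exp s * Real.exp (-L)) := by
      rw [sub_eq_add_neg, Real.exp_add]
      ring
    _ ≤ 2 * (L * μ + α * Real.exp (-L)) := by gcongr

end LevelOne

section Symmetrization

variable {G : Type*} [Fintype G]

/- Symmetry between the coordinates lets the level-one inequality, a bound on a sum over all
coordinates, control the average deviation in a single one. -/
lemma card_mul_expect_mul_relDeviation_le (i₀ : ι) (e : ι → Equiv.Perm G)
    {A : G → (ι → Bool) → ℝ} {V : G → ℝ} {α : ℝ} (hA₀ : ∀ π a, 0 ≤ A π a)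
    (hAα : ∀ π a, A π a ≤ α) (hV₀ : ∀ π, 0 ≤ V π)
    (hA : ∀ i π a, A (e i π) a = A π (a ∘ Equiv.swap i₀ i)) (hV : ∀ i π, V (e i π) = V π)
    (L : ℝ) :
    Fintype.card ι * 𝔼 π, V π * relDeviation i₀ (A π) ≤
      𝔼 π, V π * (2 * (L * (𝔼 a, A π a) + α * Real.exp (-L))) := by
  have hi (i : ι) : 𝔼 π, V π * relDeviation i (A π) = 𝔼 π, V π * relDeviation i₀ (A π) :=
    Fintype.expect_equiv (e i) _ _ fun π => by
      rw [hV, funext (hA i π), relDeviation_comp_swap]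
  calc
    _ = ∑ i, 𝔼 π, V π * relDeviation i (A π) := by simp [hi]
    _ = 𝔼 π, V π * ∑ i, relDeviation i (A π) := by simp_rw [mul_sum, expect_sum_comm]
    _ ≤ _ := expect_le_expect fun π _ =>
      mul_le_mul_of_nonneg_left (sum_relDeviation_le (hA₀ π) (hAα π) L) (hV₀ π)

lemma card_mul_expect_sum_mul_relDeviation_le {T : Type*} [Fintype T] [Nonempty G] (i₀ : ι)
    (e : ι → Equiv.Perm G) {A : T → G → (ι → Bool) → ℝ} {V : T → G → ℝ} {α : T → ℝ} {c M : ℝ}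
    (hA₀ : ∀ t π a, 0 ≤ A t π a) (hAα : ∀ t π a, A t π a ≤ α t) (hV₀ : ∀ t π, 0 ≤ V t π)
    (hA : ∀ t i π a, A t (e i π) a = A t π (a ∘ Equiv.swap i₀ i))
    (hV : ∀ t i π, V t (e i π) = V t π) (hc : ∀ π, ∑ t, V t π * 𝔼 a, A t π a = c)
    (hM : ∀ t π, α t * V t π ≤ M) (L : ℝ) :
    Fintype.card ι * 𝔼 π, ∑ t, V t π * relDeviation i₀ (A t π) ≤
      2 * (c * L + Fintype.card T * M * Real.exp (-L)) :=
  calc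
    _ = ∑ t, Fintype.card ι * 𝔼 π, V t π * relDeviation i₀ (A t π) := by
      rw [expect_sum_comm, mul_sum]
    _ ≤ ∑ t, 𝔼 π, V t π * (2 * (L * (𝔼 a, A t π a) + α t * Real.exp (-L))) :=
      sum_le_sum fun t _ => card_mul_expect_mul_relDeviation_le i₀ e (hA₀ t) (hAα t) (hV₀ t)
        (hA t) (hV t) L
    _ = 𝔼 π, 2 * (L * ∑ t, V t π * (𝔼 a, A t π a) + (∑ t, α t * V t π) * Real.exp (-L)) := by
      rw [← expect_sum_comm]
      refine expect_congr rfl fun π _ => ?_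
      rw [mul_sum, sum_mul, ← sum_add_distrib, mul_sum]
      exact sum_congr rfl fun t _ => by ring
    _ ≤ 2 * (c * L + Fintype.card T * M * Real.exp (-L)) := by
      refine expect_le univ_nonempty fun π _ => ?_
      have hsum : ∑ t, α t * V t π ≤ Fintype.card T * M :=
        (sum_le_sum fun t _ => hM t π).trans_eq (by simp)
      rw [hc, mul_comm L]
      gcongr

end Symmetrization

lemma sum_expect_mul_expect {T X Y : Type*} [Fintype T] {s : Finset X} {s' : Finset Y}
    (hs : s.Nonempty) (hs' : s'.Nonempty) {f : T → X → ℝ} {g : T → Y → ℝ} {r : ℝ}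
    (h : ∀ x ∈ s, ∀ y ∈ s', ∑ t, f t x * g t y = r) :
    ∑ t, (𝔼 x ∈ s, f t x) * 𝔼 y ∈ s', g t y = r := by
  simp_rw [expect_mul_expect, ← expect_sum_comm]
  rw [expect_congr rfl fun x hx => (expect_congr rfl (h x hx)).trans (expect_const hs' r),
    expect_const hs]

end Cube

/-! ### Matrices with a pentagon pattern -/

section Pentagon

open scoped BigOperators

-- An independent set of the 5-cycle with edges `{k, k + 2}` has at most two elements.
lemma sum_fin_five_le {r e : Fin 5 → ℝ} {c : ℝ} (he : ∀ k, 0 ≤ e k) (h : ∀ k, r k ≤ c + e k)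
    (hr : ∀ k, r k = 0 ∨ r (k + 2) = 0) : ∑ k, r k ≤ 2 * c + ∑ k, e k := by
  have h₀ : r 0 = 0 ∨ r 2 = 0 := hr 0
  have h₁ : r 1 = 0 ∨ r 3 = 0 := hr 1
  have h₂ : r 2 = 0 ∨ r 4 = 0 := hr 2
  have h₃ : r 3 = 0 ∨ r 0 = 0 := hr 3
  have h₄ : r 4 = 0 ∨ r 1 = 0 := hr 4
  rw [Fin.sum_univ_five, Fin.sum_univ_five]
  rcases h₀ with h₀ | h₀ <;> rcases h₁ with h₁ | h₁ <;> rcases h₂ with h₂ | h₂ <;>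
    rcases h₃ with h₃ | h₃ <;> rcases h₄ with h₄ | h₄ <;>
    linarith [h 0, h 1, h 2, h 3, h 4, he 0, he 1, he 2, he 3, he 4]

section FacetMean

variable {ι : Type*} [Fintype ι] [DecidableEq ι] {i : ι}

lemma facetMean_false_le {f : (ι → Bool) → ℝ} (hf : ∀ a, 0 ≤ f a) :
    facetMean i false f ≤ 11 / 10 * facetMean i true f ∨
      facetMean i false f ≤ 500 * relDeviation i f := by
  have hμ : 0 ≤ 𝔼 a, f a := expect_nonneg fun a _ => hf a
  have hfalse := facetMean_nonneg hf i false
  have htrue := facetMean_nonneg hf i true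
  rw [facetMean_eq, boolSign_false] at *
  rw [facetMean_eq, boolSign_true] at *
  rw [or_iff_not_imp_left, not_le]
  intro hlt
  rw [relDeviation, ← mul_div_assoc, le_div_iff₀ (by linarith)]
  nlinarith

lemma facetMean_mul_facetMean_le {f g : (ι → Bool) → ℝ} (hf : ∀ a, 0 ≤ f a)
    (hg : ∀ a, 0 ≤ g a) :
    facetMean i false f * facetMean i false g ≤
      121 / 100 * (facetMean i true f * facetMean i true g) +
        500 * (facetMean i false g * relDeviation i f +
          facetMean i false f * relDeviation i g) := by
  have hu := facetMean_nonneg hf i false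
  have hv := facetMean_nonneg hg i false
  have hu₀ := facetMean_nonneg hf i true
  have huv₀ := mul_nonneg hu₀ (facetMean_nonneg hg i true)
  have hp := mul_nonneg hv (relDeviation_nonneg hf i)
  have hq := mul_nonneg hu (relDeviation_nonneg hg i)
  rcases facetMean_false_le (i := i) hf with huc | hup
  · rcases facetMean_false_le (i := i) hg with hvc | hvq
    · linarith [mul_le_mul huc hvc hv (by positivity)]
    · linarith [mul_le_mul_of_nonneg_left hvq hu]
  · linarith [mul_le_mul_of_nonneg_left hup hv]

lemma sum_facetMean_mul_facetMean_le {A B : Fin 5 → (ι → Bool) → ℝ} (hA : ∀ k a, 0 ≤ A k a)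
    (hB : ∀ k b, 0 ≤ B k b) (hAk : ∀ k l a, a i = true → A k a = A l a)
    (hBk : ∀ k l b, b i = true → B k b = B l b)
    (hAB : ∀ k, facetMean i false (A k) * facetMean i false (B (k + 2)) = 0) :
    ∑ k, facetMean i false (A k) * facetMean i false (B k) ≤
      121 / 50 * (facetMean i true (A 0) * facetMean i true (B 0)) +
        500 * ∑ k, (facetMean i false (B k) * relDeviation i (A k) +
          facetMean i false (A k) * relDeviation i (B k)) := by
  have hdev : ∀ k, 0 ≤ 500 * (facetMean i false (B k) * relDeviation i (A k) +
      facetMean i false (A k) * relDeviation i (B k)) := fun k => mul_nonneg (by norm_num)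
    (add_nonneg (mul_nonneg (facetMean_nonneg (hB k) _ _) (relDeviation_nonneg (hA k) _))
      (mul_nonneg (facetMean_nonneg (hA k) _ _) (relDeviation_nonneg (hB k) _)))
  have hsum := sum_fin_five_le hdev
    (c := 121 / 100 * (facetMean i true (A 0) * facetMean i true (B 0)))
    (r := fun k => facetMean i false (A k) * facetMean i false (B k))
    (fun k => by
      rw [facetMean_congr (hAk 0 k), facetMean_congr (hBk 0 k)]
      exact facetMean_mul_facetMean_le (hA k) (hB k))
    fun k => by
      rcases mul_eq_zero.1 (hAB k) with h | h
      · exact .inl (by rw [h, zero_mul])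
      · exact .inr (by rw [h, mul_zero])
  rw [← mul_sum] at hsum
  linarith

end FacetMean

/-- A pentagon pattern in the matrix `S`: for every element `π` of a set `G` of positions and every
edge `k` of a pentagon, a cube of rows and a cube of columns of `S`. On these cubes the entries are
`2`, except for `4` where the base coordinates are both `true`; there the edge `k` is irrelevant.
Row and column cubes of nonadjacent edges `k` and `k + 2` meet in zeros where both base coordinates
are `false`. The permutation `rowExch k i` of the positions exchanges the coordinates `base` and `i`
of the rows without affecting the columns with base coordinate `false`; `colExch` does the same with
the roles of rows and columns exchanged. -/
structure PentagonCubes {X Y : Type*} (S : X → Y → ℝ) (ι G : Type*) [DecidableEq ι] where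
  base : ι
  row : Fin 5 → G → (ι → Bool) → X
  col : Fin 5 → G → (ι → Bool) → Y
  row_congr : ∀ k l π a, a base = true → row k π a = row l π a
  col_congr : ∀ k l π b, b base = true → col k π b = col l π b
  slack_self : ∀ k π a b, S (row k π a) (col k π b) = if a base && b base then 4 else 2
  slack_add_two : ∀ k π a b, a base = false → b base = false →
    S (row k π a) (col (k + 2) π b) = 0
  rowExch : Fin 5 → ι → Equiv.Perm G
  colExch : Fin 5 → ι → Equiv.Perm G
  row_rowExch : ∀ k i π a, row k (rowExch k i π) a = row k π (a ∘ Equiv.swap base i)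
  col_rowExch : ∀ k i π b, b base = false → col k (rowExch k i π) b = col k π b
  col_colExch : ∀ k i π b, col k (colExch k i π) b = col k π (b ∘ Equiv.swap base i)
  row_colExch : ∀ k i π a, a base = false → row k (colExch k i π) a = row k π a

namespace PentagonCubes

variable {X Y ι G : Type*} {S : X → Y → ℝ} [DecidableEq ι] (P : PentagonCubes S ι G)

/-- The pentagon pattern of the transposed matrix. The edge `k` is relabelled `-k`, which turns
`k + 2` into `k - 2`. -/
def transpose : PentagonCubes (fun y x => S x y) ι G where
  base := P.base
  row k := P.col (-k)
  col k := P.row (-k)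
  row_congr k l := P.col_congr (-k) (-l)
  col_congr k l := P.row_congr (-k) (-l)
  slack_self k π a b := by rw [P.slack_self, Bool.and_comm]
  slack_add_two k π a b ha hb := by simpa using P.slack_add_two (-(k + 2)) π b a hb ha
  rowExch k := P.colExch (-k)
  colExch k := P.rowExch (-k)
  row_rowExch k := P.col_colExch (-k)
  col_rowExch k := P.row_colExch (-k)
  col_colExch k := P.row_rowExch (-k)
  row_colExch k := P.col_rowExch (-k)

variable [Fintype ι]

/-- The mean of `φ` over the rows of a cube whose base coordinate is `c`. -/
def rowMean (φ : X → ℝ) (k : Fin 5) (π : G) (c : Bool) : ℝ :=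
  facetMean P.base c fun a => φ (P.row k π a)

/-- The mean of `ψ` over the columns of a cube whose base coordinate is `c`. -/
def colMean (ψ : Y → ℝ) (k : Fin 5) (π : G) (c : Bool) : ℝ :=
  facetMean P.base c fun b => ψ (P.col k π b)

/-- The relative deviation of `φ` on a cube of rows in the direction of the base coordinate. -/
def rowDev (φ : X → ℝ) (k : Fin 5) (π : G) : ℝ := relDeviation P.base fun a => φ (P.row k π a)

/-- The relative deviation of `ψ` on a cube of columns in the direction of the base coordinate. -/
def colDev (ψ : Y → ℝ) (k : Fin 5) (π : G) : ℝ := relDeviation P.base fun b => ψ (P.col k π b)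

section Factorization

variable {P} {T : Type*} [Fintype T] {f : T → X → ℝ} {g : T → Y → ℝ}

lemma sum_rowMean_mul_colMean (hfg : ∀ x y, S x y = ∑ t, f t x * g t y) (k : Fin 5) (π : G)
    (c d : Bool) :
    ∑ t, P.rowMean (f t) k π c * P.colMean (g t) k π d = if c && d then 4 else 2 :=
  sum_expect_mul_expect (facet_nonempty _ _) (facet_nonempty _ _) fun a ha b hb => by
    rw [← hfg, P.slack_self, (mem_filter.1 ha).2, (mem_filter.1 hb).2]

lemma sum_colMean_mul_expect (hfg : ∀ x y, S x y = ∑ t, f t x * g t y) (k : Fin 5) (π : G) :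
    ∑ t, P.colMean (g t) k π false * 𝔼 a, f t (P.row k π a) = 2 :=
  calc
    _ = (∑ t, P.rowMean (f t) k π false * P.colMean (g t) k π false +
        ∑ t, P.rowMean (f t) k π true * P.colMean (g t) k π false) / 2 := by
      rw [← sum_add_distrib, sum_div]
      refine sum_congr rfl fun t _ => ?_
      rw [expect_eq_facetMean P.base, rowMean, rowMean]
      ring
    _ = 2 := by
      rw [sum_rowMean_mul_colMean hfg, sum_rowMean_mul_colMean hfg]
      norm_num

variable (hf : ∀ t x, 0 ≤ f t x) (hg : ∀ t y, 0 ≤ g t y)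
  (hfg : ∀ x y, S x y = ∑ t, f t x * g t y)

include hf hg hfg

lemma rowMean_mul_colMean_add_two (k : Fin 5) (π : G) (t : T) :
    P.rowMean (f t) k π false * P.colMean (g t) (k + 2) π false = 0 := by
  have hsum : ∑ t, P.rowMean (f t) k π false * P.colMean (g t) (k + 2) π false = 0 :=
    sum_expect_mul_expect (facet_nonempty _ _) (facet_nonempty _ _) fun a ha b hb => by
      rw [← hfg, P.slack_add_two k π a b (mem_filter.1 ha).2 (mem_filter.1 hb).2]
  exact (sum_eq_zero_iff_of_nonneg fun t _ => mul_nonneg (facetMean_nonneg (fun _ => hf t _) _ _)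
    (facetMean_nonneg (fun _ => hg t _) _ _)).1 hsum t (mem_univ t)

/- The five sums of products of false-facet means add up to `5 * 2`. In each term at most two of the
five products are nonzero, and without deviation each is at most the product of the true-facet
means; the latter products add up to `4`. -/
lemma le_sum_dev (P : PentagonCubes S ι G) (π : G) :
    8 / 25 ≤ 500 * ∑ k, (∑ t, P.colMean (g t) k π false * P.rowDev (f t) k π +
      ∑ t, P.rowMean (f t) k π false * P.colDev (g t) k π) := by
  have hterm (t : T) : ∑ k, P.rowMean (f t) k π false * P.colMean (g t) k π false ≤
      121 / 50 * (P.rowMean (f t) 0 π true * P.colMean (g t) 0 π true) +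
        500 * ∑ k, (P.colMean (g t) k π false * P.rowDev (f t) k π +
          P.rowMean (f t) k π false * P.colDev (g t) k π) :=
    sum_facetMean_mul_facetMean_le (fun k _ => hf t _) (fun k _ => hg t _)
      (fun k l a ha => by rw [P.row_congr k l π a ha])
      (fun k l b hb => by rw [P.col_congr k l π b hb])
      fun k => rowMean_mul_colMean_add_two hf hg hfg k π t
  have hsum := sum_le_sum fun t (_ : t ∈ univ) => hterm t
  rw [sum_add_distrib, ← mul_sum, ← mul_sum, sum_comm, sum_comm (s := univ (α := T)),
    sum_rowMean_mul_colMean hfg, sum_congr rfl fun k _ => sum_rowMean_mul_colMean hfg k π _ _]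
    at hsum
  simp only [sum_add_distrib, sum_const] at hsum ⊢
  norm_num at hsum
  linarith

variable [Fintype G] [Nonempty G] {M : ℝ}

lemma card_mul_expect_rowDev_le [Finite X] (hM : ∀ x y, S x y ≤ M) (k : Fin 5) (L : ℝ) :
    Fintype.card ι * 𝔼 π, ∑ t, P.colMean (g t) k π false * P.rowDev (f t) k π ≤
      2 * (2 * L + Fintype.card T * M * Real.exp (-L)) := by
  obtain ⟨π₀⟩ := ‹Nonempty G›
  have : Nonempty X := ⟨P.row 0 π₀ 0⟩
  choose x hx using fun t => Finite.exists_max (f t)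
  have hfM (t : T) (y : Y) : f t (x t) * g t y ≤ M := by
    refine le_trans ?_ (hM (x t) y)
    rw [hfg]
    exact single_le_sum (f := fun s => f s (x t) * g s y)
      (fun s _ => mul_nonneg (hf s _) (hg s _)) (mem_univ t)
  refine card_mul_expect_sum_mul_relDeviation_le P.base (P.rowExch k) (α := fun t => f t (x t))
    (fun t _ _ => hf t _) (fun t _ _ => hx t _)
    (fun t _ => facetMean_nonneg (fun _ => hg t _) _ _) (fun t i π a => by rw [P.row_rowExch])
    (fun t i π => facetMean_congr fun b hb => by rw [P.col_rowExch k i π b hb])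
    (sum_colMean_mul_expect hfg k) (fun t π => ?_) L
  rw [facetMean, mul_expect]
  exact expect_le (facet_nonempty _ _) fun b _ => hfM t _

lemma card_mul_expect_colDev_le [Finite Y] (hM : ∀ x y, S x y ≤ M) (k : Fin 5) (L : ℝ) :
    Fintype.card ι * 𝔼 π, ∑ t, P.rowMean (f t) k π false * P.colDev (g t) k π ≤
      2 * (2 * L + Fintype.card T * M * Real.exp (-L)) := by
  have := card_mul_expect_rowDev_le (P := P.transpose) hg hf
    (fun y x => by simp_rw [hfg, mul_comm]) (fun y x => hM x y) (-k) L
  simpa [transpose, rowMean, colMean, rowDev, colDev] using this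

end Factorization

theorem card_mul_exp_le (P : PentagonCubes S ι G) [Finite G] [Nonempty G] [Finite X] [Finite Y]
    {M : ℝ} (hM : ∀ x y, S x y ≤ M) {r : ℕ} (h : HasNonnegFactorization S r) :
    Fintype.card ι * Real.exp (Fintype.card ι / 10 ^ 5) ≤ 10 ^ 5 * M * r := by
  cases nonempty_fintype G
  obtain ⟨f, g, hf, hg, hfg⟩ := h
  set c : ℝ := (Fintype.card ι : ℝ)
  have hdev : 8 / 25 ≤ 500 * ∑ k, (𝔼 π, ∑ t, P.colMean (g t) k π false * P.rowDev (f t) k π +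
      𝔼 π, ∑ t, P.rowMean (f t) k π false * P.colDev (g t) k π) := by
    simp_rw [← expect_add_distrib, ← expect_sum_comm, mul_expect]
    exact le_expect univ_nonempty fun π _ => P.le_sum_dev hf hg hfg π
  have hcard : c * ∑ k, (𝔼 π, ∑ t, P.colMean (g t) k π false * P.rowDev (f t) k π +
      𝔼 π, ∑ t, P.rowMean (f t) k π false * P.colDev (g t) k π) ≤
      20 * (2 * (c / 10 ^ 5) + r * M * Real.exp (-(c / 10 ^ 5))) := by
    rw [mul_sum]
    refine (sum_le_card_nsmul univ _ (4 * (2 * (c / 10 ^ 5) + r * M * Real.exp (-(c / 10 ^ 5))))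
      fun k _ => ?_).trans_eq (by simp; ring)
    have hrow := card_mul_expect_rowDev_le (P := P) hf hg hfg hM k (c / 10 ^ 5)
    have hcol := card_mul_expect_colDev_le (P := P) hf hg hfg hM k (c / 10 ^ 5)
    rw [Fintype.card_fin] at hrow hcol
    rw [mul_add]
    linarith
  have hc : 0 ≤ c := Nat.cast_nonneg _
  have hle : c ≤ 10 ^ 5 * M * r * Real.exp (-(c / 10 ^ 5)) := by
    have := mul_le_mul_of_nonneg_left hdev hc
    linarith
  rwa [Real.exp_neg, ← div_eq_mul_inv, le_div_iff₀ (Real.exp_pos _)] at hle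

end PentagonCubes

end Pentagon

/-! ### The pentagon pattern of involutions and odd sets -/

section CrossCount

variable {V : Type*} [DecidableEq V]

/-- The number of points of `Z` that `τ` fixes or sends outside `Z`. Matching every fixed point
with a twin outside `Z` turns it into the number of edges of a perfect matching that leave `Z`. -/
def crossCount (τ : V → V) (Z : Finset V) : ℕ :=
  #{v ∈ Z | τ v = v ∨ τ v ∉ Z}

lemma crossCount_le_card (τ : V → V) (Z : Finset V) : crossCount τ Z ≤ #Z :=
  card_filter_le _ _

lemma crossCount_conj_map (π : Equiv.Perm V) (τ : V → V) (Z : Finset V) :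
    crossCount (π ∘ τ ∘ π.symm) (Z.map π.toEmbedding) = crossCount τ Z := by
  simp [crossCount, filter_map, Function.comp_def]

end CrossCount

section PentagonPairs

variable {κ : Type*}

/-- The involution on the pentagon `Fin 5` and the pairs `κ × Bool` that swaps the two ends of the
`k`-th pentagon edge, unless `x none`, and of the pair `e`, unless `x (some e)`. -/
def pentInvol (k : Fin 5) (x : Option κ → Bool) : Fin 5 ⊕ κ × Bool → Fin 5 ⊕ κ × Bool
  | Sum.inl i => Sum.inl (if x none then i else Equiv.swap k (k + 1) i)
  | Sum.inr (e, s) => Sum.inr (e, if x (some e) then s else !s)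

lemma pentInvol_involutive (k : Fin 5) (x : Option κ → Bool) :
    Function.Involutive (pentInvol k x) := by
  rintro (i | ⟨e, s⟩)
  · by_cases h : x none = true <;> simp [pentInvol, h]
  · by_cases h : x (some e) = true <;> simp [pentInvol, h]

lemma pentInvol_congr (k l : Fin 5) {x : Option κ → Bool} (hx : x none = true) :
    pentInvol k x = pentInvol l x := by
  funext v
  rcases v with i | ⟨e, s⟩ <;> simp [pentInvol, hx]

section Region

variable [Fintype κ]

/-- The set of all pentagon points off the `k`-th edge, together with the ends of that edge if
`y none` and of the pair `e` if `y (some e)`. -/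
def pentRegion (k : Fin 5) (y : Option κ → Bool) : Finset (Fin 5 ⊕ κ × Bool) :=
  {v | Sum.elim (fun i => y none || (i ≠ k && i ≠ k + 1)) (fun q => y (some q.1)) v}

lemma pentRegion_congr (k l : Fin 5) {y : Option κ → Bool} (hy : y none = true) :
    pentRegion k y = pentRegion l y := by
  simp [pentRegion, hy]

lemma odd_card_pentRegion (k : Fin 5) (y : Option κ → Bool) : Odd #(pentRegion k y) := by
  have hpentagon : ∀ (k : Fin 5) (c : Bool), Odd #{i | c || (i ≠ k && i ≠ k + 1)} := by decide
  have hunion : pentRegion k y = disjSum {i | y none || (i ≠ k && i ≠ k + 1)}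
      (({e | y (some e)} : Finset κ) ×ˢ univ) := by
    ext (i | ⟨e, s⟩) <;> simp [pentRegion]
  rw [hunion, card_disjSum, card_product]
  exact (hpentagon k (y none)).add_even (by simp)

end Region

section Exchange

variable [DecidableEq κ]

/-- The permutation exchanging the `k`-th pentagon edge with the pair `e`, the edge itself being
`none`. -/
def pentExch (k : Fin 5) : Option κ → Equiv.Perm (Fin 5 ⊕ κ × Bool)
  | none => 1
  | some e => Equiv.swap (Sum.inl k) (Sum.inr (e, false)) *
      Equiv.swap (Sum.inl (k + 1)) (Sum.inr (e, true))

lemma pentExch_comp_pentInvol (k : Fin 5) (e : Option κ) (x : Option κ → Bool) :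
    pentExch k e ∘ pentInvol k x = pentInvol k (x ∘ Equiv.swap none e) ∘ pentExch k e := by
  rcases e with _ | e
  · simp [pentExch]
  funext v
  rcases v with i | ⟨e', s⟩
  · rcases eq_or_ne i k with rfl | hi
    · cases h : x none <;> simp [pentExch, pentInvol, Equiv.swap_apply_def, h]
    rcases eq_or_ne i (k + 1) with rfl | hi'
    · cases h : x none <;> simp [pentExch, pentInvol, Equiv.swap_apply_def, h]
    · simp [pentExch, pentInvol, Equiv.swap_apply_def, hi, hi']
  · rcases eq_or_ne e' e with rfl | he
    · cases s <;> cases h : x (some e') <;>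
        simp [pentExch, pentInvol, Equiv.swap_apply_def, h]
    · simp [pentExch, pentInvol, Equiv.swap_apply_def, he]

variable [Fintype κ]

lemma pentExch_mem_pentRegion (k : Fin 5) (e : Option κ) (y : Option κ → Bool)
    (v : Fin 5 ⊕ κ × Bool) :
    pentExch k e v ∈ pentRegion k (y ∘ Equiv.swap none e) ↔ v ∈ pentRegion k y := by
  rcases e with _ | e
  · simp [pentExch]
  rcases v with i | ⟨e', s⟩
  · rcases eq_or_ne i k with rfl | hi
    · simp [pentExch, pentRegion, Equiv.swap_apply_def]
    rcases eq_or_ne i (k + 1) with rfl | hi'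
    · simp [pentExch, pentRegion, Equiv.swap_apply_def]
    · simp [pentExch, pentRegion, Equiv.swap_apply_def, hi, hi']
  · rcases eq_or_ne e' e with rfl | he
    · cases s <;> simp [pentExch, pentRegion, Equiv.swap_apply_def]
    · simp [pentExch, pentRegion, Equiv.swap_apply_def, he]

lemma crossCount_pentInvol_pentRegion (k l : Fin 5) {x y : Option κ → Bool}
    (h : ∀ e, x (some e) = false ∨ y (some e) = false) :
    crossCount (pentInvol k x) (pentRegion l y) =
      crossCount (fun i => if x none then i else Equiv.swap k (k + 1) i)
        {i | y none || (i ≠ l && i ≠ l + 1)} := by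
  rw [crossCount, crossCount, ← card_map (.inl : Fin 5 ↪ Fin 5 ⊕ κ × Bool)]
  refine congrArg card ?_
  ext (i | ⟨e, s⟩)
  · simp [pentRegion, pentInvol]
  · rcases h e with h | h <;> simp [pentRegion, pentInvol, h]

lemma crossCount_pentInvol_pentRegion_self (k : Fin 5) {x y : Option κ → Bool}
    (h : ∀ e, x (some e) = false ∨ y (some e) = false) :
    crossCount (pentInvol k x) (pentRegion k y) = if x none && y none then 5 else 3 := by
  rw [crossCount_pentInvol_pentRegion k k h]
  generalize x none = c
  generalize y none = c'
  revert k c c'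
  decide

-- The ends of the edge `k` lie in the region of the edge `k + 2`, and the fifth pentagon point,
-- fixed by the involution, is the only one that contributes.
lemma crossCount_pentInvol_pentRegion_add_two (k : Fin 5) {x y : Option κ → Bool}
    (h : ∀ e, x (some e) = false ∨ y (some e) = false) (hx : x none = false)
    (hy : y none = false) : crossCount (pentInvol k x) (pentRegion (k + 2) y) = 1 := by
  rw [crossCount_pentInvol_pentRegion k (k + 2) h, hx, hy]
  revert k
  decide

end Exchange

end PentagonPairs

section HalfExt

variable {κ : Type*}

/-- The extension of `a` by `false` from the half `o` of the pairs to all pairs. -/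
def halfExt (o : Bool) (a : Option κ → Bool) : Option (Bool × κ) → Bool
  | none => a none
  | some (o', e) => if o' = o then a (some e) else false

lemma halfExt_disjoint (a b : Option κ → Bool) (e : Bool × κ) :
    halfExt false a (some e) = false ∨ halfExt true b (some e) = false := by
  rcases e with ⟨_ | _, e⟩ <;> simp [halfExt]

variable [DecidableEq κ]

lemma halfExt_comp_swap (o : Bool) (a : Option κ → Bool) (i : Option κ) :
    halfExt o a ∘ Equiv.swap none (i.map (Prod.mk o)) = halfExt o (a ∘ Equiv.swap none i) := by
  funext e
  rcases i with _ | i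
  · simp
  rcases e with _ | ⟨o', e⟩
  · simp [halfExt]
  · rcases eq_or_ne o' o with rfl | ho
    · by_cases he : e = i <;> simp [halfExt, Equiv.swap_apply_def, he]
    · simp [halfExt, Equiv.swap_apply_def, ho]

lemma halfExt_comp_swap_of_ne {o o' : Bool} (ho : o' ≠ o) {a : Option κ → Bool}
    (ha : a none = false) (i : Option κ) :
    halfExt o a ∘ Equiv.swap none (i.map (Prod.mk o')) = halfExt o a := by
  funext e
  rcases i with _ | i
  · simp
  rcases e with _ | ⟨o'', e⟩
  · simp [halfExt, ha, ho]
  · by_cases he : o'' = o' ∧ e = i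
    · simp [halfExt, he, ha, ho]
    · simp [halfExt, Equiv.swap_apply_def, he]

end HalfExt

section Orbit

variable {κ : Type*} [DecidableEq κ]

/-- The relabelling of `pentInvol k x` by `π`. -/
def pentRow (k : Fin 5) (π : Equiv.Perm (Fin 5 ⊕ κ × Bool)) (x : Option κ → Bool) :
    {τ : Fin 5 ⊕ κ × Bool → Fin 5 ⊕ κ × Bool // Function.Involutive τ} :=
  ⟨π ∘ pentInvol k x ∘ π.symm, fun v => by simp [pentInvol_involutive k x (π.symm v)]⟩

lemma pentRow_mul_pentExch (k : Fin 5) (π : Equiv.Perm (Fin 5 ⊕ κ × Bool)) (e : Option κ)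
    (x : Option κ → Bool) :
    pentRow k (π * pentExch k e) x = pentRow k π (x ∘ Equiv.swap none e) := by
  refine Subtype.ext (funext fun v => congrArg π ?_)
  simpa [Equiv.Perm.mul_def] using
    congrFun (pentExch_comp_pentInvol k e x) ((pentExch k e).symm (π.symm v))

variable [Fintype κ]

/-- The relabelling of `pentRegion k y` by `π`. -/
def pentCol (k : Fin 5) (π : Equiv.Perm (Fin 5 ⊕ κ × Bool)) (y : Option κ → Bool) :
    {Z : Finset (Fin 5 ⊕ κ × Bool) // Odd #Z} :=
  ⟨(pentRegion k y).map π.toEmbedding, by simpa using odd_card_pentRegion k y⟩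

lemma pentCol_mul_pentExch (k : Fin 5) (π : Equiv.Perm (Fin 5 ⊕ κ × Bool)) (e : Option κ)
    (y : Option κ → Bool) :
    pentCol k (π * pentExch k e) y = pentCol k π (y ∘ Equiv.swap none e) := by
  refine Subtype.ext (Finset.ext fun v => ?_)
  have := pentExch_mem_pentRegion k e y ((pentExch k e).symm (π.symm v))
  rw [Equiv.apply_symm_apply] at this
  rw [pentCol, pentCol, mem_map_equiv, mem_map_equiv, this]
  rfl

end Orbit

section InvolutionSlack

/-- The slack matrix of the inequalities `crossCount τ Z ≥ 1` for involutions `τ` and odd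
sets `Z`. -/
def involutionSlack {V : Type*} [DecidableEq V] (τ : {τ : V → V // Function.Involutive τ})
    (Z : {Z : Finset V // Odd #Z}) : ℝ :=
  crossCount τ.1 Z.1 - 1

variable (κ : Type*) [DecidableEq κ] [Fintype κ]

/-- The pentagon pattern in which the pairs `(false, e)` are controlled by the involution and the
pairs `(true, e)` by the odd set. -/
def pentagonCubes : PentagonCubes (involutionSlack (V := Fin 5 ⊕ (Bool × κ) × Bool)) (Option κ)
    (Equiv.Perm (Fin 5 ⊕ (Bool × κ) × Bool)) where
  base := none
  row k π a := pentRow k π (halfExt false a)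
  col k π b := pentCol k π (halfExt true b)
  row_congr k l π a ha := Subtype.ext <| by
    simp [pentRow, pentInvol_congr k l (show halfExt false a none = true from ha)]
  col_congr k l π b hb := Subtype.ext <| by
    simp [pentCol, pentRegion_congr k l (show halfExt true b none = true from hb)]
  slack_self k π a b := by
    rw [involutionSlack, pentRow, pentCol, crossCount_conj_map,
      crossCount_pentInvol_pentRegion_self k (halfExt_disjoint a b)]
    change _ = if halfExt false a none && halfExt true b none then _ else _
    split_ifs <;> norm_num
  slack_add_two k π a b ha hb := by
    rw [involutionSlack, pentRow, pentCol, crossCount_conj_map,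
      crossCount_pentInvol_pentRegion_add_two k (halfExt_disjoint a b) ha hb]
    simp
  rowExch k i := Equiv.mulRight (pentExch k (i.map (Prod.mk false)))
  colExch k i := Equiv.mulRight (pentExch k (i.map (Prod.mk true)))
  row_rowExch k i π a := (pentRow_mul_pentExch ..).trans <| by rw [halfExt_comp_swap]
  col_rowExch k i π b hb := (pentCol_mul_pentExch ..).trans <| by
    rw [halfExt_comp_swap_of_ne (by simp) hb]
  col_colExch k i π b := (pentCol_mul_pentExch ..).trans <| by rw [halfExt_comp_swap]
  row_colExch k i π a ha := (pentRow_mul_pentExch ..).trans <| by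
    rw [halfExt_comp_swap_of_ne (by simp) ha]

theorem exp_le_of_hasNonnegFactorization_involutionSlack {r : ℕ}
    (h : HasNonnegFactorization (involutionSlack (V := Fin 5 ⊕ (Bool × κ) × Bool)) r) :
    Real.exp ((Fintype.card κ + 1) / 10 ^ 5) ≤ 5 * 10 ^ 5 * r := by
  have hM (τ : {τ : Fin 5 ⊕ (Bool × κ) × Bool → _ // Function.Involutive τ}) (Z) :
      involutionSlack τ Z ≤ 5 * (Fintype.card κ + 1) := by
    have hcross : (crossCount τ.1 Z.1 : ℝ) ≤ 5 + 2 * Fintype.card κ * 2 := by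
      exact_mod_cast (crossCount_le_card τ.1 Z.1).trans ((card_le_univ Z.1).trans_eq (by simp))
    rw [involutionSlack]
    linarith [(Nat.cast_nonneg (Fintype.card κ) : (0 : ℝ) ≤ _)]
  have key := (pentagonCubes κ).card_mul_exp_le hM h
  rw [Fintype.card_option, Nat.cast_add_one] at key
  refine le_of_mul_le_mul_left (key.trans_eq ?_) (by positivity : (0 : ℝ) < Fintype.card κ + 1)
  ring

end InvolutionSlack

/-! ### Perfect matchings and odd cuts -/

section OddCut

/-- The perfect matchings of the complete graph on `W`, as fixed-point-free involutions. -/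
abbrev PerfectMatching (W : Type*) : Type _ :=
  {F : W → W // Function.Involutive F ∧ ∀ w, F w ≠ w}

/-- The slack matrix of the odd cut inequalities: the number of edges of the matching that leave
the odd set, minus one. -/
def oddCutSlack {W : Type*} [DecidableEq W] (F : PerfectMatching W)
    (U : {U : Finset W // Odd #U}) : ℝ :=
  #{w ∈ U.1 | F.1 w ∉ U.1} - 1

variable {V W : Type*}

/-- The perfect matching that joins the two copies of each fixed point of `τ`, and otherwise joins
`v` to `τ v` within each copy of `V`. -/
def doubleMatching [DecidableEq V] (τ : {τ : V → V // Function.Involutive τ}) :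
    PerfectMatching (V × Bool) :=
  ⟨fun w => (τ.1 w.1, if τ.1 w.1 = w.1 then !w.2 else w.2), by
    rintro ⟨v, s⟩
    by_cases h : τ.1 v = v
    · simp [h]
    · simp [h, τ.2 v, Ne.symm h], by
    rintro ⟨v, s⟩
    by_cases h : τ.1 v = v <;> simp [h]⟩

/-- The transport of a perfect matching along a bijection. -/
def PerfectMatching.map (e : V ≃ W) (F : PerfectMatching V) : PerfectMatching W :=
  ⟨e ∘ F.1 ∘ e.symm, fun w => by simp [F.2.1 (e.symm w)], fun w => by
    simpa [← e.eq_symm_apply] using F.2.2 (e.symm w)⟩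

/-- The first of the two copies of `Z` in `V × Bool`, transported along a bijection. -/
def firstCopy (e : V × Bool ≃ W) (Z : {Z : Finset V // Odd #Z}) : {U : Finset W // Odd #U} :=
  ⟨(Z.1.map (.sectL V false)).map e.toEmbedding, by simpa only [card_map] using Z.2⟩

lemma oddCutSlack_map_doubleMatching_firstCopy [DecidableEq V] [DecidableEq W]
    (e : V × Bool ≃ W) (τ : {τ : V → V // Function.Involutive τ})
    (Z : {Z : Finset V // Odd #Z}) :
    oddCutSlack ((doubleMatching τ).map e) (firstCopy e Z) = involutionSlack τ Z := by
  rw [oddCutSlack, involutionSlack, crossCount, firstCopy, filter_map, card_map, filter_map,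
    card_map]
  congr 3
  refine filter_congr fun v _ => ?_
  by_cases h : τ.1 v = v <;> simp [PerfectMatching.map, doubleMatching, h]

theorem exp_le_of_hasNonnegFactorization_oddCutSlack [DecidableEq W] [Fintype W] {N r : ℕ}
    (hW : Fintype.card W = 2 * (5 + 4 * N)) (h : HasNonnegFactorization (oddCutSlack (W := W)) r) :
    Real.exp ((N + 1) / 10 ^ 5) ≤ 5 * 10 ^ 5 * r := by
  let e : (Fin 5 ⊕ (Bool × Fin N) × Bool) × Bool ≃ W := Fintype.equivOfCardEq (by simp [hW]; ring)
  have hsub := h.submatrix (fun τ => (doubleMatching τ).map e) (firstCopy e)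
  simp only [oddCutSlack_map_doubleMatching_firstCopy] at hsub
  simpa using exp_le_of_hasNonnegFactorization_involutionSlack (Fin N) hsub

end OddCut

/-! ### Scheduling unit jobs and jobs of size two -/

section Schedule

variable {n m : ℕ} (p : Fin n → ℕ) (σ : Fin n → Fin m)

lemma sum_mul_load (y : Fin m → ℕ) : ∑ i, y i * load p σ i = ∑ j, y (σ j) * p j := by
  simp_rw [load, mul_sum, mul_ite, mul_zero]
  rw [sum_comm]
  simp

lemma sum_load : ∑ i, load p σ i = ∑ j, p j := by
  simpa using sum_mul_load p σ 1

lemma load_le_makespan (i : Fin m) : load p σ i ≤ makespan p σ :=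
  le_sup (mem_univ i)

lemma sum_le_mul_makespan : ∑ j, p j ≤ m * makespan p σ := by
  simpa [sum_load] using sum_le_card_nsmul univ _ _ fun i _ => load_le_makespan p σ i

variable {p σ}

lemma load_eq_of_makespan_le {t : ℕ} (hp : ∑ j, p j = m * t) (hσ : makespan p σ ≤ t)
    (i : Fin m) : load p σ i = t := by
  refine (sum_eq_sum_iff_of_le fun i _ => (load_le_makespan p σ i).trans hσ).1 ?_ i (mem_univ i)
  simp [sum_load, hp]

end Schedule

lemma nonneg_of_forall_mem_extremePoints {ι : Type*} [Finite ι] {S : Set (ι → ℝ)}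
    (hS : S.Finite) (w : (ι → ℝ) →ᵃ[ℝ] ℝ)
    (hw : ∀ x ∈ Set.extremePoints ℝ (convexHull ℝ S), 0 ≤ w x) {z : ι → ℝ}
    (hz : z ∈ convexHull ℝ S) : 0 ≤ w z := by
  cases nonempty_fintype ι
  rw [← closure_convexHull_extremePoints (hS.isCompact_convexHull ℝ) (convex_convexHull ℝ S)] at hz
  exact closure_minimal (convexHull_min hw ((convex_Ici 0).affine_preimage w))
    (isClosed_Ici.preimage w.continuous_of_finiteDimensional) hz

section UnitDouble

/-- The sizes of `2 d` unit jobs followed by `d` jobs of size two. -/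
def unitDoubleSizes (d : ℕ) : Fin (2 * d + d) → ℕ :=
  Fin.addCases (fun _ => 1) (fun _ => 2)

lemma unitDoubleSizes_eq_one_or_two (d : ℕ) (j : Fin (2 * d + d)) :
    unitDoubleSizes d j = 1 ∨ unitDoubleSizes d j = 2 := by
  refine Fin.addCases (fun j => ?_) (fun j => ?_) j <;> simp [unitDoubleSizes]

lemma sum_unitDoubleSizes (d : ℕ) : ∑ j, unitDoubleSizes d j = 2 * d * 2 := by
  simp [Fin.sum_univ_add, unitDoubleSizes]
  ring

variable {d : ℕ}

lemma two_le_makespan_unitDoubleSizes (hd : 0 < d) (σ : Fin (2 * d + d) → Fin (2 * d)) :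
    2 ≤ makespan (unitDoubleSizes d) σ :=
  Nat.le_of_mul_le_mul_left ((sum_unitDoubleSizes d).symm.trans_le (sum_le_mul_makespan _ σ))
    (by omega)

/-- The unit jobs that `U` separates from their machine, the unit jobs and the machines being
both indexed by `Fin (2 * d)`. -/
def separatedJobs (U : Finset (Fin (2 * d))) (σ : Fin (2 * d + d) → Fin (2 * d)) :
    Finset (Fin (2 * d)) :=
  {j | ¬(j ∈ U ↔ σ (Fin.castAdd d j) ∈ U)}

-- Otherwise the machines in `U` would carry exactly the unit jobs in `U` and some jobs of size
-- two, an odd total load.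
lemma separatedJobs_nonempty {U : Finset (Fin (2 * d))} (hU : Odd #U)
    {σ : Fin (2 * d + d) → Fin (2 * d)} (hσ : makespan (unitDoubleSizes d) σ ≤ 2) :
    (separatedJobs U σ).Nonempty := by
  by_contra hempty
  have hiff : ∀ j, σ (Fin.castAdd d j) ∈ U ↔ j ∈ U := by
    simpa [separatedJobs, filter_nonempty_iff, iff_comm] using hempty
  have hload := sum_mul_load (unitDoubleSizes d) σ fun i => if i ∈ U then 1 else 0
  simp_rw [load_eq_of_makespan_le (sum_unitDoubleSizes d) hσ, Fin.sum_univ_add, hiff,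
    unitDoubleSizes, Fin.addCases_left, Fin.addCases_right, ← sum_mul] at hload
  simp at hload
  obtain ⟨q, hq⟩ := hU
  omega

/-- The affine functional whose value at the assignment vector of a schedule is the number of
separated unit jobs, minus one. -/
def separationFunctional (U : Finset (Fin (2 * d))) :
    (Fin (2 * d) × Fin (2 * d + d) → ℝ) →ᵃ[ℝ] ℝ :=
  (∑ j, ∑ i, (if j ∈ U ↔ i ∈ U then (0 : ℝ) else 1) •
    (LinearMap.proj (i, Fin.castAdd d j) :
      (Fin (2 * d) × Fin (2 * d + d) → ℝ) →ₗ[ℝ] ℝ)).toAffineMap - AffineMap.const ℝ _ 1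

lemma separationFunctional_assignVec (U : Finset (Fin (2 * d)))
    (σ : Fin (2 * d + d) → Fin (2 * d)) :
    separationFunctional U (assignVec σ) = #(separatedJobs U σ) - 1 := by
  rw [separatedJobs, card_filter]
  simp only [separationFunctional, AffineMap.coe_sub, Pi.sub_apply, LinearMap.coe_toAffineMap,
    AffineMap.const_apply, LinearMap.sum_apply, LinearMap.smul_apply, LinearMap.proj_apply,
    assignVec, smul_eq_mul]
  simp [ite_not]

end UnitDouble

section MatchingSchedule

variable {d : ℕ} (F : PerfectMatching (Fin (2 * d)))

lemma card_descents : #{i | F.1 i < i} = d := by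
  have hcompl : #{i | F.1 i < i} = #{i | ¬F.1 i < i} := by
    refine card_equiv (F.2.1.toPerm F.1) fun i => ?_
    simp [F.2.1 i, (F.2.2 i).le_iff_lt]
  have := card_filter_add_card_filter_not (s := univ) fun i => F.1 i < i
  rw [← hcompl, card_univ, Fintype.card_fin] at this
  omega

/-- The schedule that puts the unit jobs `i < F i` together on the machine `i` and the jobs of
size two on the remaining machines. -/
def matchingSchedule : Fin (2 * d + d) → Fin (2 * d) :=
  Fin.addCases (fun j => min j (F.1 j)) (orderEmbOfFin _ (card_descents F))

lemma matchingSchedule_castAdd (j : Fin (2 * d)) :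
    matchingSchedule F (Fin.castAdd d j) = min j (F.1 j) :=
  Fin.addCases_left j

lemma card_min_eq_of_lt {i : Fin (2 * d)} (hi : F.1 i < i) : #{j | min j (F.1 j) = i} = 0 := by
  refine card_eq_zero.2 (filter_eq_empty_iff.2 fun j _ hj => ?_)
  rcases min_choice j (F.1 j) with h | h <;> obtain rfl : _ = i := h.symm.trans hj
  · exact hi.not_ge (min_eq_left_iff.1 h)
  · rw [F.2.1 j] at hi
    exact hi.not_ge (min_eq_right_iff.1 h)

lemma card_min_eq_le_two (i : Fin (2 * d)) : #{j | min j (F.1 j) = i} ≤ 2 := by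
  refine (card_le_card (t := {i, F.1 i}) fun j hj => ?_).trans card_le_two
  have hj := (mem_filter.1 hj).2
  rcases min_choice j (F.1 j) with h | h <;> obtain rfl : _ = i := h.symm.trans hj
  · simp
  · simp [F.2.1 j]

lemma load_matchingSchedule (i : Fin (2 * d)) :
    load (unitDoubleSizes d) (matchingSchedule F) i =
      #{j | min j (F.1 j) = i} + if F.1 i < i then 2 else 0 := by
  have hdouble : (∑ k, if orderEmbOfFin _ (card_descents F) k = i then 2 else 0) =
      if F.1 i < i then 2 else 0 := by
    have := sum_map univ (orderEmbOfFin _ (card_descents F)).toEmbedding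
      fun j => if j = i then 2 else 0
    rw [map_orderEmbOfFin_univ] at this
    simpa using this.symm
  rw [load, Fin.sum_univ_add, card_filter, ← hdouble]
  simp [unitDoubleSizes, matchingSchedule]

lemma makespan_matchingSchedule_le : makespan (unitDoubleSizes d) (matchingSchedule F) ≤ 2 := by
  refine Finset.sup_le fun i _ => ?_
  rw [load_matchingSchedule]
  split_ifs with hi
  · rw [card_min_eq_of_lt F hi]
  · exact card_min_eq_le_two F i

lemma optMakespan_unitDoubleSizes (hd : 0 < d) :
    optMakespan (2 * d + d) (2 * d) (unitDoubleSizes d) = 2 := by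
  let F : PerfectMatching (Fin (2 * d)) := ⟨Fin.rev, Fin.rev_rev, fun i => by
    rw [Ne, Fin.ext_iff, Fin.val_rev]
    omega⟩
  have hF := (makespan_matchingSchedule_le F).antisymm (two_le_makespan_unitDoubleSizes hd _)
  refine le_antisymm (Nat.sInf_le ⟨_, hF⟩) (le_csInf ⟨2, _, hF⟩ ?_)
  rintro _ ⟨σ, rfl⟩
  exact two_le_makespan_unitDoubleSizes hd σ

lemma card_separatedJobs_matchingSchedule (U : Finset (Fin (2 * d))) :
    #(separatedJobs U (matchingSchedule F)) = #{i ∈ U | F.1 i ∉ U} := by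
  have hdouble (h : Fin (2 * d) → ℕ) : 2 * ∑ j, h j = ∑ j, (h j + h (F.1 j)) := by
    rw [sum_add_distrib, two_mul]
    exact congrArg _ (Equiv.sum_comp (F.2.1.toPerm F.1) h).symm
  have hflip (j) : (if j ∈ U ↔ min j (F.1 j) ∈ U then 0 else 1) +
      (if F.1 j ∈ U ↔ min j (F.1 j) ∈ U then 0 else 1) =
      (if j ∈ U ∧ F.1 j ∉ U then 1 else 0) + if F.1 j ∈ U ∧ j ∉ U then 1 else 0 := by
    rcases min_choice j (F.1 j) with h | h <;> rw [h] <;> by_cases j ∈ U <;>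
      by_cases F.1 j ∈ U <;> simp [*]
  refine Nat.eq_of_mul_eq_mul_left two_pos ?_
  rw [separatedJobs, card_filter, ← filter_univ_mem U, filter_filter, card_filter, hdouble, hdouble]
  simpa [matchingSchedule_castAdd, F.2.1 _, min_comm (F.1 _)] using sum_congr rfl fun j _ => hflip j

end MatchingSchedule

section ExtensionComplexity

variable {d : ℕ} {S : Set (Fin (2 * d) × Fin (2 * d + d) → ℝ)}

lemma separationFunctional_nonneg (hS : S.Finite)
    (hext : ∀ x ∈ Set.extremePoints ℝ (convexHull ℝ S), ∃ σ,
      x = assignVec σ ∧ makespan (unitDoubleSizes d) σ ≤ 2)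
    {U : Finset (Fin (2 * d))} (hU : Odd #U) {z : Fin (2 * d) × Fin (2 * d + d) → ℝ}
    (hz : z ∈ convexHull ℝ S) : 0 ≤ separationFunctional U z := by
  refine nonneg_of_forall_mem_extremePoints hS _ (fun x hx => ?_) hz
  obtain ⟨σ, rfl, hσ⟩ := hext x hx
  rw [separationFunctional_assignVec, sub_nonneg, Nat.one_le_cast]
  exact (separatedJobs_nonempty hU hσ).card_pos

theorem hasNonnegFactorization_oddCutSlack_xc_add_one (hS : S.Finite)
    (hext : ∀ x ∈ Set.extremePoints ℝ (convexHull ℝ S), ∃ σ,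
      x = assignVec σ ∧ makespan (unitDoubleSizes d) σ ≤ 2)
    (hmem : ∀ σ, makespan (unitDoubleSizes d) σ ≤ 2 → assignVec σ ∈ convexHull ℝ S) :
    HasNonnegFactorization (oddCutSlack (W := Fin (2 * d))) (xc (convexHull ℝ S) + 1) := by
  have := (isEF_xc_convexHull hS).hasNonnegFactorization
    (fun F => assignVec (matchingSchedule F)) (fun F => hmem _ (makespan_matchingSchedule_le F))
    (fun U : {U : Finset (Fin (2 * d)) // Odd #U} => separationFunctional U.1)
    fun U _ => separationFunctional_nonneg hS hext U.2
  simp only [separationFunctional_assignVec, card_separatedJobs_matchingSchedule] at this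
  exact this

end ExtensionComplexity

/-! ### The lower bound -/

lemma two_rpow_div_log_le_exp {n : ℕ} (hn : 2 ≤ n) :
    (2 : ℝ) ^ (n / Real.log n) ≤ Real.exp n := by
  have hlog : Real.log 2 ≤ Real.log n := Real.log_le_log two_pos (by exact_mod_cast hn)
  have hlog₀ : 0 < Real.log n := (Real.log_pos one_lt_two).trans_le hlog
  rw [Real.rpow_def_of_pos two_pos, Real.exp_le_exp, mul_div_assoc', div_le_iff₀ hlog₀, mul_comm]
  gcongr

lemma exp_le_of_exp_add_le {x y : ℝ} (hx : 0 ≤ x)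
    (h : Real.exp (x + 14) ≤ 5 * 10 ^ 5 * (y + 1)) : Real.exp x ≤ y := by
  have hexp : (10 : ℝ) ^ 6 ≤ Real.exp 14 := calc
    (10 : ℝ) ^ 6 ≤ 2.7 ^ 14 := by norm_num
    _ ≤ Real.exp 1 ^ 14 := by gcongr; linarith [Real.exp_one_gt_d9]
    _ = Real.exp 14 := by rw [← Real.exp_nat_mul]; norm_num
  have hmul := mul_le_mul_of_nonneg_left hexp (Real.exp_pos x).le
  rw [Real.exp_add] at h
  linarith [Real.one_le_exp hx]

theorem exp_le_xc_convexHull {n d : ℕ} (hd : d = 5 + 4 * (10 ^ 5 * (n + 14)))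
    {S : Set (Fin (2 * d) × Fin (2 * d + d) → ℝ)} (hS : S.Finite)
    (hext : ∀ x ∈ Set.extremePoints ℝ (convexHull ℝ S), ∃ σ,
      x = assignVec σ ∧ makespan (unitDoubleSizes d) σ ≤ 2)
    (hmem : ∀ σ, makespan (unitDoubleSizes d) σ ≤ 2 → assignVec σ ∈ convexHull ℝ S) :
    Real.exp n ≤ xc (convexHull ℝ S) := by
  have hexp := exp_le_of_hasNonnegFactorization_oddCutSlack (N := 10 ^ 5 * (n + 14))
    (by rw [Fintype.card_fin, hd]) (hasNonnegFactorization_oddCutSlack_xc_add_one hS hext hmem)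
  push_cast at hexp
  exact exp_le_of_exp_add_le n.cast_nonneg ((Real.exp_le_exp.2 (by linarith)).trans hexp)

theorem makespan_large_xc_approx_general :
    ∃ C : ℝ, 1 ≤ C ∧ ∀ n : ℕ, 1 ≤ n →
      ∃ (nJ m : ℕ) (p : Fin nJ → ℕ),
        (nJ : ℝ) ≤ C * n ∧ (m : ℝ) ≤ C * n ∧
        (∀ j, p j = 1 ∨ p j = 2) ∧
        optMakespan nJ m p = 2 ∧
        ∀ Qbar : Set (Fin m × Fin nJ → ℝ),
          (∃ S : Set (Fin m × Fin nJ → ℝ), S.Finite ∧ Qbar = convexHull ℝ S) →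
          (∀ x ∈ Set.extremePoints ℝ Qbar, ∃ σ : Fin nJ → Fin m,
            x = assignVec σ ∧ (makespan p σ : ℝ) < 3 / 2 * (optMakespan nJ m p : ℝ)) →
          (∀ σ : Fin nJ → Fin m, makespan p σ = optMakespan nJ m p → assignVec σ ∈ Qbar) →
          Real.exp n ≤ (xc Qbar : ℝ) := by
  refine ⟨2 * 10 ^ 7, by norm_num, fun n hn => ?_⟩
  obtain ⟨d, hd⟩ : ∃ d, d = 5 + 4 * (10 ^ 5 * (n + 14)) := ⟨_, rfl⟩
  have hd₀ : 0 < d := by omega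
  have hjobs : 2 * d + d ≤ 2 * 10 ^ 7 * n := by omega
  have hmachines : 2 * d ≤ 2 * 10 ^ 7 * n := by omega
  have hopt := optMakespan_unitDoubleSizes hd₀
  refine ⟨2 * d + d, 2 * d, unitDoubleSizes d, by exact_mod_cast hjobs,
    by exact_mod_cast hmachines, unitDoubleSizes_eq_one_or_two d, hopt, ?_⟩
  rintro _ ⟨S, hS, rfl⟩ hext hmem
  rw [hopt] at hext hmem
  refine exp_le_xc_convexHull hd hS
    (fun x hx => (hext x hx).imp fun σ => And.imp_right fun hσ => ?_)
    fun σ hσ => hmem σ (hσ.antisymm (two_le_makespan_unitDoubleSizes hd₀ σ))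
  have : (makespan (unitDoubleSizes d) σ : ℝ) < 3 := by simpa using hσ
  exact Nat.lt_succ_iff.1 (by exact_mod_cast this)

/-- For every `0 < ε ≤ 1/2` there are instances of `P||C_max` with `O(n)` jobs and
machines, processing times in `{1,2}` and optimal makespan `2`, such that every polytope
contained in `Q(J,M)` whose extreme points are assignment vectors of schedules of makespan
at most `(3/2 − ε)·opt` and which contains the assignment vector of every schedule of
makespan `opt = 2` has extension complexity at least `2^(c·n/log n)`. -/
theorem makespan_large_xc_approx (ε : ℝ) (hε0 : 0 < ε) (hε : ε ≤ 1 / 2) :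
    ∃ c C : ℝ, 0 < c ∧ 1 ≤ C ∧ ∀ n : ℕ, 2 ≤ n →
      ∃ (nJ m : ℕ) (p : Fin nJ → ℕ),
        (nJ : ℝ) ≤ C * n ∧ (m : ℝ) ≤ C * n ∧
        (∀ j, p j = 1 ∨ p j = 2) ∧
        optMakespan nJ m p = 2 ∧
        ∀ Qbar : Set (Fin m × Fin nJ → ℝ),
          (∃ S : Set (Fin m × Fin nJ → ℝ), S.Finite ∧ Qbar = convexHull ℝ S) →
          Qbar ⊆ Qpoly nJ m →
          (∀ x ∈ Set.extremePoints ℝ Qbar, ∃ σ : Fin nJ → Fin m,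
            x = assignVec σ ∧
            (makespan p σ : ℝ) ≤ (3 / 2 - ε) * (optMakespan nJ m p : ℝ)) →
          (∀ σ : Fin nJ → Fin m, makespan p σ = optMakespan nJ m p →
            assignVec σ ∈ Qbar) →
          (2 : ℝ) ^ (c * n / Real.log n) ≤ (xc Qbar : ℝ) := by
  obtain ⟨C, hC, h⟩ := makespan_large_xc_approx_general
  refine ⟨1, C, one_pos, hC, fun n hn => ?_⟩
  obtain ⟨nJ, m, p, hnJ, hm, hp, hopt, hxc⟩ := h n (by omega)
  refine ⟨nJ, m, p, hnJ, hm, hp, hopt, fun Qbar hQ _ hext hmem => ?_⟩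
  rw [one_mul]
  refine (two_rpow_div_log_le_exp hn).trans (hxc Qbar hQ (fun x hx => ?_) hmem)
  obtain ⟨σ, hσ, hle⟩ := hext x hx
  refine ⟨σ, hσ, hle.trans_lt ?_⟩
  rw [hopt]
  push_cast
  linarith
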